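/- Let A = ⟨Q,Σ⟩ be a PFA with |Q| = n and |Σ| = m, and let ℓ > 0. If the SAT instance (V,C) encoding (A,ℓ) is satisfiable, then A has a carefully synchronizing word of length ℓ; more precisely, if φ is a satisfying assignment and χ : {1,…,ℓ} → {1,…,m} is the map assigning to each t the unique i with φ(x_{i,t}) = 1, then the word w = a_{χ(1)}⋯a_{χ(ℓ)} is carefully synchronizing for A. -/

import Mathlib

open Set

/-- The extension of the transition function of a PFA (with states `Fin n` and letters
`Fin m`) to subsets of states and words: `δ(S,ε) = S`, `δ(S,va) = ⋃_{q ∈ δ(S,v)} δ(q,a)`. -/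
def pfaExt {n m : ℕ} (δ : Fin n → Fin m → Option (Fin n))
    (S : Set (Fin n)) (w : List (Fin m)) : Set (Fin n) :=
  w.foldl (fun T a => {p | ∃ q ∈ T, δ q a = some p}) S

/-- A nonempty word `w = a₁⋯a_ℓ` is carefully synchronizing for the PFA `δ` if (C1) its
first letter is defined at every state, (C2) for `1 < t ≤ ℓ` the letter `a_t` is defined
at every state of `δ(Q, a₁⋯a_{t-1})`, and (C3) `|δ(Q,w)| = 1`. -/
def CarefulSync {n m : ℕ} (δ : Fin n → Fin m → Option (Fin n)) (w : List (Fin m)) : Prop :=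
  w ≠ [] ∧
  (∀ t : Fin w.length, ∀ q ∈ pfaExt δ Set.univ (w.take t.val), (δ q (w.get t)).isSome) ∧
  (pfaExt δ Set.univ w).ncard = 1

/-- Boolean variables of the SAT instance encoding `(A, ℓ)`: letter variables `x i t`
(`1 ≤ i ≤ m`, `1 ≤ t ≤ ℓ`) and state variables `y j t` (`1 ≤ j ≤ n`, `0 ≤ t ≤ ℓ`). -/
inductive SatVar (n m ℓ : ℕ) : Type where
  | x : Fin m → Fin ℓ → SatVar n m ℓ
  | y : Fin n → Fin (ℓ + 1) → SatVar n m ℓ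
deriving DecidableEq

/-- A literal: a variable together with a polarity (`true` = positive, `false` = negated). -/
abbrev SatLit (n m ℓ : ℕ) := SatVar n m ℓ × Bool

/-- A clause is a disjunction of literals, represented as a list. -/
abbrev SatClause (n m ℓ : ℕ) := List (SatLit n m ℓ)

/-- A truth assignment satisfies a clause if it makes at least one of its literals true. -/
def SatisfiesClause {n m ℓ : ℕ} (φ : SatVar n m ℓ → Bool) (c : SatClause n m ℓ) : Prop :=
  ∃ l ∈ c, φ l.1 = l.2

/-- A truth assignment satisfies a set of clauses if it satisfies every clause in it. -/
def Satisfies {n m ℓ : ℕ} (φ : SatVar n m ℓ → Bool) (C : Set (SatClause n m ℓ)) : Prop :=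
  ∀ c ∈ C, SatisfiesClause φ c

/-- The group `I` of initial clauses: the unit clauses `y_{j,0}` for `1 ≤ j ≤ n`. -/
def clausesI (n m ℓ : ℕ) : Set (SatClause n m ℓ) :=
  {c | ∃ j : Fin n, c = [(SatVar.y j 0, true)]}

/-- The group `L` of letter clauses: for each `t`, the clause `x_{1,t} ∨ ⋯ ∨ x_{m,t}`
and the clauses `¬x_{r,t} ∨ ¬x_{s,t}` for `1 ≤ r < s ≤ m`. -/
def clausesL (n m ℓ : ℕ) : Set (SatClause n m ℓ) :=
  {c | ∃ t : Fin ℓ, c = (List.finRange m).map fun i => ((SatVar.x i t : SatVar n m ℓ), true)} ∪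
  {c | ∃ t : Fin ℓ, ∃ r s : Fin m, r < s ∧
    c = [(SatVar.x r t, false), (SatVar.x s t, false)]}

/-- The group `T` of transition clauses: for each `t` and each pair `(q_j, a_i)`, the
clause `¬y_{j,t-1} ∨ ¬x_{i,t} ∨ y_{k,t}` if `δ(q_j, a_i) = {q_k}`, and the clause
`¬y_{j,t-1} ∨ ¬x_{i,t}` if `δ(q_j, a_i)` is undefined. -/
def clausesT {n m : ℕ} (δ : Fin n → Fin m → Option (Fin n)) (ℓ : ℕ) :
    Set (SatClause n m ℓ) :=
  {c | ∃ (t : Fin ℓ) (j : Fin n) (i : Fin m) (k : Fin n), δ j i = some k ∧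
    c = [(SatVar.y j t.castSucc, false), (SatVar.x i t, false), (SatVar.y k t.succ, true)]} ∪
  {c | ∃ (t : Fin ℓ) (j : Fin n) (i : Fin m), δ j i = none ∧
    c = [(SatVar.y j t.castSucc, false), (SatVar.x i t, false)]}

/-- The group `S` of synchronization clauses: `¬y_{r,ℓ} ∨ ¬y_{s,ℓ}` for `1 ≤ r < s ≤ n`. -/
def clausesS (n m ℓ : ℕ) : Set (SatClause n m ℓ) :=
  {c | ∃ r s : Fin n, r < s ∧
    c = [(SatVar.y r (Fin.last ℓ), false), (SatVar.y s (Fin.last ℓ), false)]}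

/-- The set `C = I ∪ L ∪ T ∪ S` of clauses of the SAT instance encoding `(A, ℓ)`. -/
def encodingClauses {n m : ℕ} (δ : Fin n → Fin m → Option (Fin n)) (ℓ : ℕ) :
    Set (SatClause n m ℓ) :=
  clausesI n m ℓ ∪ clausesL n m ℓ ∪ clausesT δ ℓ ∪ clausesS n m ℓ

/-!
Let `P t` be the set of states `q_j` with `φ(y_{j,t}) = 1`. The clauses in `I` make `P 0` the
whole state set, those in `T` make the letter `a_{χ(t)}` defined on `P (t-1)` with image inside
`P t`, and those in `S` leave at most one state in `P ℓ`. Hence `δ(Q, a_{χ(1)}⋯a_{χ(t)}) ⊆ P t`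
for every `t`, so each letter is defined where it is read, no prefix of the word empties the set of
active states, and the last such set is a nonempty subset of `P ℓ`.
-/

section PartialAutomaton

variable {n m ℓ : ℕ} {δ : Fin n → Fin m → Option (Fin n)} {S : Set (Fin n)} {χ : Fin ℓ → Fin m}
  {P : Fin (ℓ + 1) → Set (Fin n)}

theorem pfaExt_append_singleton (w : List (Fin m)) (a : Fin m) :
    pfaExt δ S (w ++ [a]) = {p | ∃ q ∈ pfaExt δ S w, δ q a = some p} :=
  List.foldl_concat ..

theorem pfaExt_take_succ_ofFn (t : Fin ℓ) :
    pfaExt δ S ((List.ofFn χ).take (t + 1)) =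
      {p | ∃ q ∈ pfaExt δ S ((List.ofFn χ).take t), δ q (χ t) = some p} := by
  rw [List.take_succ_eq_append_getElem (by simp), pfaExt_append_singleton, List.getElem_ofFn]

theorem pfaExt_take_ofFn_subset (hzero : S ⊆ P 0)
    (hstep : ∀ t, ∀ q ∈ P t.castSucc, ∀ p, δ q (χ t) = some p → p ∈ P t.succ)
    (t : Fin (ℓ + 1)) : pfaExt δ S ((List.ofFn χ).take t) ⊆ P t := by
  induction t using Fin.induction with
  | zero => exact hzero
  | succ t ih =>
    rw [Fin.val_succ, pfaExt_take_succ_ofFn]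
    rintro p ⟨q, hq, hqp⟩
    exact hstep t q (ih hq) p hqp

theorem pfaExt_nonempty {w : List (Fin m)} (hS : S.Nonempty)
    (hdef : ∀ t : Fin w.length, ∀ q ∈ pfaExt δ S (w.take t), (δ q (w.get t)).isSome) :
    (pfaExt δ S w).Nonempty := by
  induction w generalizing S with
  | nil => exact hS
  | cons a w ih =>
    obtain ⟨q, hq⟩ := hS
    obtain ⟨p, hqp⟩ := Option.isSome_iff_exists.1 (hdef 0 q hq)
    exact ih ⟨p, q, hq, hqp⟩ fun t => hdef t.succ

theorem carefulSync_ofFn_of_invariant (hn : 0 < n) (hℓ : 0 < ℓ) (hzero : P 0 = univ)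
    (hstep : ∀ t, ∀ q ∈ P t.castSucc, ∃ p ∈ P t.succ, δ q (χ t) = some p)
    (hlast : (P (Fin.last ℓ)).Subsingleton) : CarefulSync δ (List.ofFn χ) := by
  have hsubset : ∀ t : Fin (ℓ + 1), pfaExt δ univ ((List.ofFn χ).take t) ⊆ P t := by
    refine pfaExt_take_ofFn_subset hzero.ge fun t q hq p hqp => ?_
    obtain ⟨r, hr, hqr⟩ := hstep t q hq
    rwa [Option.some_injective _ (hqp.symm.trans hqr)]
  have hdefined : ∀ t : Fin (List.ofFn χ).length,
      ∀ q ∈ pfaExt δ univ ((List.ofFn χ).take t), (δ q ((List.ofFn χ).get t)).isSome := by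
    intro t q hq
    obtain ⟨p, -, hqp⟩ := hstep (t.cast List.length_ofFn) q (hsubset (t.cast _).castSucc hq)
    rw [List.get_ofFn, hqp, Option.isSome_some]
  have hnonempty : (pfaExt δ univ (List.ofFn χ)).Nonempty :=
    pfaExt_nonempty ⟨⟨0, hn⟩, mem_univ _⟩ hdefined
  have hsubsingleton : (pfaExt δ univ (List.ofFn χ)).Subsingleton := by
    refine hlast.anti ?_
    simpa only [Fin.val_last, List.take_of_length_le List.length_ofFn.le]
      using hsubset (Fin.last ℓ)
  refine ⟨?_, hdefined, ?_⟩
  · rw [Ne, List.ofFn_eq_nil_iff]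
    exact hℓ.ne'
  · exact ncard_eq_one.2 (exists_eq_singleton_iff_nonempty_subsingleton.2
      ⟨hnonempty, hsubsingleton⟩)

end PartialAutomaton

section Encoding

variable {n m ℓ : ℕ} {δ : Fin n → Fin m → Option (Fin n)} {φ : SatVar n m ℓ → Bool}

theorem satisfies_union {C D : Set (SatClause n m ℓ)} :
    Satisfies φ (C ∪ D) ↔ Satisfies φ C ∧ Satisfies φ D :=
  forall₂_or_left

/-- The states `q_j` whose variable `y_{j,t}` is true under `φ`: for a satisfying `φ`, an upper
bound for the set of states active after `t` letters. -/
def markedStates (φ : SatVar n m ℓ → Bool) (t : Fin (ℓ + 1)) : Set (Fin n) :=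
  {j | φ (SatVar.y j t) = true}

theorem mem_markedStates {j : Fin n} {t : Fin (ℓ + 1)} :
    j ∈ markedStates φ t ↔ φ (SatVar.y j t) = true :=
  Iff.rfl

theorem markedStates_zero (hI : Satisfies φ (clausesI n m ℓ)) : markedStates φ 0 = univ := by
  refine eq_univ_of_forall fun j => ?_
  simpa [SatisfiesClause, mem_markedStates] using hI _ ⟨j, rfl⟩

theorem exists_mem_markedStates_succ (hT : Satisfies φ (clausesT δ ℓ)) {t : Fin ℓ} {i : Fin m}
    {j : Fin n} (hi : φ (SatVar.x i t) = true) (hj : j ∈ markedStates φ t.castSucc) :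
    ∃ k ∈ markedStates φ t.succ, δ j i = some k := by
  rw [mem_markedStates] at hj
  cases hδ : δ j i with
  | none => simpa [SatisfiesClause, hi, hj] using hT _ (.inr ⟨t, j, i, hδ, rfl⟩)
  | some k =>
    have hk : k ∈ markedStates φ t.succ := by
      simpa [SatisfiesClause, mem_markedStates, hi, hj] using hT _ (.inl ⟨t, j, i, k, hδ, rfl⟩)
    exact ⟨k, hk, rfl⟩

theorem markedStates_last_subsingleton (hS : Satisfies φ (clausesS n m ℓ)) :
    (markedStates φ (Fin.last ℓ)).Subsingleton := by
  have not_lt : ∀ r ∈ markedStates φ (Fin.last ℓ), ∀ s ∈ markedStates φ (Fin.last ℓ), ¬r < s := by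
    intro r hr s hs hrs
    rw [mem_markedStates] at hr hs
    simpa [SatisfiesClause, hr, hs] using hS _ ⟨r, s, hrs, rfl⟩
  exact fun r hr s hs => le_antisymm (le_of_not_gt (not_lt s hs r hr))
    (le_of_not_gt (not_lt r hr s hs))

end Encoding

theorem sat_imp_csw_general {n m ℓ : ℕ} (hn : 0 < n) (hℓ : 0 < ℓ)
    (δ : Fin n → Fin m → Option (Fin n)) (φ : SatVar n m ℓ → Bool)
    (hI : Satisfies φ (clausesI n m ℓ)) (hT : Satisfies φ (clausesT δ ℓ))
    (hS : Satisfies φ (clausesS n m ℓ))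
    (χ : Fin ℓ → Fin m) (hχ : ∀ t, φ (SatVar.x (χ t) t) = true) :
    CarefulSync δ ((List.finRange ℓ).map χ) ∧ ((List.finRange ℓ).map χ).length = ℓ := by
  rw [← List.ofFn_eq_map]
  exact ⟨carefulSync_ofFn_of_invariant hn hℓ (markedStates_zero hI)
    (fun t _ => exists_mem_markedStates_succ hT (hχ t)) (markedStates_last_subsingleton hS),
    List.length_ofFn⟩

/-- If `φ` is a satisfying assignment of the SAT instance encoding `(A, ℓ)` and
`χ` assigns to each `t ∈ {1,…,ℓ}` the unique `i` with `φ(x_{i,t}) = 1`, then the word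
`w = a_{χ(1)} ⋯ a_{χ(ℓ)}` is carefully synchronizing for `A` (and has length `ℓ`). -/
theorem sat_imp_csw {n m ℓ : ℕ} (hn : 0 < n) (hm : 0 < m) (hℓ : 0 < ℓ)
    (δ : Fin n → Fin m → Option (Fin n))
    (φ : SatVar n m ℓ → Bool) (hφ : Satisfies φ (encodingClauses δ ℓ))
    (χ : Fin ℓ → Fin m) (hχ : ∀ t : Fin ℓ, ∀ i : Fin m, φ (SatVar.x i t) = true ↔ i = χ t) :
    CarefulSync δ ((List.finRange ℓ).map χ) ∧ ((List.finRange ℓ).map χ).length = ℓ := by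
  obtain ⟨⟨⟨hI, -⟩, hT⟩, hS⟩ := by simpa only [encodingClauses, satisfies_union] using hφ
  exact sat_imp_csw_general hn hℓ δ φ hI hT hS χ fun t => (hχ t (χ t)).2 rfl
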